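/- arXiv:2210.14459 — 2 statements merged into one kernel-verified Lean document; each statement's English description precedes it below -/
import Mathlib

section
/- Suppose a PI sequence (h^i)_{i≥0} exists, the detectability assumption holds, the initial stabilizing bound V⁰ ≤ ᾱ_V∘σ holds with ᾱ_V of class K∞, and h* is an admissible globally optimal policy with V* := J(·,h*). Then there exist a class-KL function β and a continuous nondecreasing function α̃ : [0,∞) → [0,∞) with α̃(0) = 0 such that for every iteration i ≥ 0 and every x ∈ ℝ^n, V^i(x) − V*(x) ≤ α̃(β(σ(x), i)). -/
/-!
Write `φ*` for the closed loop under the optimal policy, and `V^i`, `V*` for the costs.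

* Policy improvement gives `V^{i+1} ≤ V^i`, hence
  `V^{i+1}(x) ≤ ℓ(x, h*(x)) + V^i(f(x, h*(x)))`; iterating along `φ*` yields
  `V^i(x) ≤ V*(x) + V⁰(φ*(i, x))` (`Jcost_le_add`). Since `V⁰ ≤ ᾱ_V ∘ σ`, it suffices to bound
  `σ(φ*(i, x))` by a class-KL function of `(σ(x), i)`, and `α̃ = ᾱ_V` works.
* `V*` is at most `ᾱ_V(σ)`, so the stage costs along `φ*` sum to at most `ᾱ_V(σ(x))`.
  With the detectability inequality this gives boundedness and stability (`stable_of_detect`: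
  a sublevel set of `W` is invariant as long as the stage cost is small) and uniform attractivity
  (`attract_of_detect`). For the latter `χ_W(ℓ_k)` need not be summable when `χ_W` is not linear;
  the inequality `χ_W(ℓ) ≤ χ_W(δ) + χ_W(A) ℓ / δ` for `ℓ ≤ A` replaces summability, so `σ`
  cannot stay above a level `ε` for longer than a time depending only on `ε` and `σ(x)`.
* The function `sup {σ(φ*(j, x)) : σ(x) ≤ s, j ≥ t}` has every property of a class-KL function
  except continuity in `s`. Averaging it over `[s, 2s]` restores continuity
  (`exists_classKL_ge`).
-/


open scoped NNReal ENNReal Topology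

noncomputable section

/-- A class-K∞ function on `ℝ≥0 ≃ [0,∞)`: continuous, strictly increasing,
zero at zero, and unbounded. -/
def ClassKInf (α : ℝ≥0 → ℝ≥0) : Prop :=
  Continuous α ∧ StrictMono α ∧ α 0 = 0 ∧ ∀ M : ℝ≥0, ∃ s : ℝ≥0, M ≤ α s

/-- A class-KL function on `[0,∞) × [0,∞)`. -/
def ClassKL (β : ℝ≥0 → ℝ≥0 → ℝ≥0) : Prop :=
  (∀ t, Continuous fun s => β s t) ∧ (∀ t, Monotone fun s => β s t) ∧
    (∀ t, β 0 t = 0) ∧ (∀ s, Antitone fun t => β s t) ∧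
    (∀ s, Filter.Tendsto (fun t => β s t) Filter.atTop (nhds 0))

variable {n m : ℕ}

/-- Closed-loop solution of `x(k+1) = f(x(k), h(x(k)))` from `x`. -/
def phiCL (f : (Fin n → ℝ) → (Fin m → ℝ) → Fin n → ℝ)
    (h : (Fin n → ℝ) → Fin m → ℝ) (x : Fin n → ℝ) : ℕ → Fin n → ℝ
  | 0 => x
  | k + 1 => f (phiCL f h x k) (h (phiCL f h x k))

/-- Infinite-horizon closed-loop cost `J(x,h)`, valued in `[0,∞]`. -/
def Jcost (f : (Fin n → ℝ) → (Fin m → ℝ) → Fin n → ℝ)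
    (ℓ : (Fin n → ℝ) → (Fin m → ℝ) → ℝ≥0)
    (x : Fin n → ℝ) (h : (Fin n → ℝ) → Fin m → ℝ) : ℝ≥0∞ :=
  ∑' k : ℕ, (ℓ (phiCL f h x k) (h (phiCL f h x k)) : ℝ≥0∞)

/-- Open-loop solution of `x(k+1) = f(x(k), u(k))` from `x`. -/
def phiOL (f : (Fin n → ℝ) → (Fin m → ℝ) → Fin n → ℝ)
    (x : Fin n → ℝ) (u : ℕ → Fin m → ℝ) : ℕ → Fin n → ℝ
  | 0 => x
  | k + 1 => f (phiOL f x u k) (u k)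

/-- Infinite-horizon cost of an input sequence, valued in `[0,∞]`. -/
def JcostOL (f : (Fin n → ℝ) → (Fin m → ℝ) → Fin n → ℝ)
    (ℓ : (Fin n → ℝ) → (Fin m → ℝ) → ℝ≥0)
    (x : Fin n → ℝ) (u : ℕ → Fin m → ℝ) : ℝ≥0∞ :=
  ∑' k : ℕ, (ℓ (phiOL f x u k) (u k) : ℝ≥0∞)

/-! ### Domination by class-KL functions -/

lemma tendsto_zero_of_eventually_le {ι : Type*} {l : Filter ι} {g : ι → ℝ≥0}
    (h : ∀ ε : ℝ≥0, 0 < ε → ∀ᶠ t in l, g t ≤ ε) : Filter.Tendsto g l (nhds 0) := by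
  refine NNReal.nhds_zero_basis.tendsto_right_iff.2 fun ε hε => ?_
  filter_upwards [h (ε / 2) (by positivity)] with t ht
  exact ht.trans_lt (NNReal.half_lt_self hε.ne')

/-- A bound that is monotone in `s`, antitone in `t`, vanishing as `t → ∞` and small for small
`s` is dominated by a class-KL function, namely its average `∫ u in 1..2, b (s * u) t`. -/
lemma exists_classKL_ge (b : ℝ≥0 → ℝ≥0 → ℝ≥0) (hmono : ∀ t, Monotone fun s => b s t)
    (hanti : ∀ s, Antitone fun t => b s t)
    (hlim : ∀ s, Filter.Tendsto (fun t => b s t) Filter.atTop (nhds 0))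
    (hsmall : ∀ ε : ℝ≥0, 0 < ε → ∃ ρ : ℝ≥0, 0 < ρ ∧ ∀ t, b ρ t ≤ ε) :
    ∃ β, ClassKL β ∧ ∀ s t, b s t ≤ β s t := by
  have gm : ∀ t, Monotone fun v : ℝ => (b v.toNNReal t : ℝ) := fun t v w h =>
    NNReal.coe_le_coe.2 (hmono t (Real.toNNReal_le_toNNReal h))
  have hint : ∀ (s t : ℝ≥0), IntervalIntegrable (fun u : ℝ => (b (s * u : ℝ).toNNReal t : ℝ))
      MeasureTheory.volume 1 2 := fun s t =>
    Monotone.intervalIntegrable fun v w h => gm t (mul_le_mul_of_nonneg_left h s.2)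
  have hlow : ∀ s t : ℝ≥0, (b s t : ℝ) ≤ ∫ u in (1:ℝ)..2, (b (s * u : ℝ).toNNReal t : ℝ) := by
    intro s t
    have h1 : ∫ u in (1:ℝ)..2, (b s t : ℝ) ≤ ∫ u in (1:ℝ)..2, (b (s * u : ℝ).toNNReal t : ℝ) := by
      refine intervalIntegral.integral_mono_on (by norm_num) (by simp) (hint s t) fun u hu => ?_
      have := gm t (show (s:ℝ) ≤ s * u from le_mul_of_one_le_right s.2 hu.1)
      simpa using this
    norm_num at h1
    exact h1
  have hup : ∀ s t : ℝ≥0,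
      (∫ u in (1:ℝ)..2, (b (s * u : ℝ).toNNReal t : ℝ)) ≤ (b (2 * s) t : ℝ) := by
    intro s t
    have h1 : ∫ u in (1:ℝ)..2, (b (s * u : ℝ).toNNReal t : ℝ) ≤
        ∫ u in (1:ℝ)..2, (b (2 * s) t : ℝ) := by
      refine intervalIntegral.integral_mono_on (by norm_num) (hint s t) (by simp) fun u hu => ?_
      have := gm t (show (s:ℝ) * u ≤ ((2 * s : ℝ≥0) : ℝ) by
        push_cast
        nlinarith [hu.2, s.2, mul_le_mul_of_nonneg_left hu.2 s.2])
      simpa only [Real.toNNReal_coe] using this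
    norm_num at h1
    exact h1
  have hup' : ∀ s t : ℝ≥0,
      (∫ u in (1:ℝ)..2, (b (s * u : ℝ).toNNReal t : ℝ)).toNNReal ≤ b (2 * s) t := fun s t =>
    Real.toNNReal_le_iff_le_coe.2 (hup s t)
  have hb0 : ∀ t, b 0 t = 0 := by
    intro t
    by_contra h
    obtain ⟨ρ, hρ, h1⟩ := hsmall (b 0 t / 2) (by positivity)
    have h2 : b 0 t ≤ b 0 t / 2 := (hmono t (zero_le (a := ρ))).trans (h1 t)
    exact absurd h2 (not_le.2 (NNReal.half_lt_self h))
  have hβ0 : ∀ t : ℝ≥0, (∫ u in (1:ℝ)..2, (b (((0:ℝ≥0):ℝ) * u : ℝ).toNNReal t : ℝ)).toNNReal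
      = 0 := by
    intro t
    have := hup' 0 t
    rw [mul_zero, hb0] at this
    exact le_antisymm this bot_le
  refine ⟨fun s t => (∫ u in (1:ℝ)..2, (b (s * u : ℝ).toNNReal t : ℝ)).toNNReal,
    ⟨?_, ?_, ?_, ?_, ?_⟩, ?_⟩
  · intro t
    rw [continuous_iff_continuousAt]
    intro s
    rcases eq_or_ne s 0 with rfl | hs
    · -- at the origin, the upper bound `b (2 * s) t` forces the limit `0`
      unfold ContinuousAt
      beta_reduce
      rw [hβ0]
      refine tendsto_zero_of_eventually_le ?_
      intro ε hε
      obtain ⟨ρ, hρ, h1⟩ := hsmall ε hε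
      filter_upwards [Iio_mem_nhds (show (0:ℝ≥0) < ρ / 2 by positivity)] with s hs
      refine (hup' s t).trans ((hmono t ?_).trans (h1 t))
      have : 2 * s ≤ 2 * (ρ / 2) := by gcongr; exact le_of_lt hs
      rwa [mul_div_cancel₀ _ (two_ne_zero)] at this
    · -- away from the origin, substitute `v = s * u`
      have hs' : (s:ℝ) ≠ 0 := by exact_mod_cast hs
      have hP : Continuous fun r : ℝ => ∫ v in (0:ℝ)..r, (b v.toNNReal t : ℝ) :=
        intervalIntegral.continuous_primitive (fun a c => (gm t).intervalIntegrable) 0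
      have hc : ContinuousAt (fun r : ℝ≥0 => ((r:ℝ)⁻¹ *
          ((∫ v in (0:ℝ)..((r:ℝ) * 2), (b v.toNNReal t : ℝ)) -
            ∫ v in (0:ℝ)..((r:ℝ) * 1), (b v.toNNReal t : ℝ))).toNNReal) s := by
        refine continuous_real_toNNReal.continuousAt.comp ?_
        refine ContinuousAt.mul
          (NNReal.continuous_coe.continuousAt.inv₀ hs') (Continuous.continuousAt ?_)
        exact (hP.comp (by fun_prop)).sub (hP.comp (by fun_prop))
      refine hc.congr ?_
      filter_upwards [isOpen_ne.mem_nhds hs] with r hr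
      have hr' : (r:ℝ) ≠ 0 := by exact_mod_cast hr
      congr 1
      rw [intervalIntegral.integral_comp_mul_left (fun v : ℝ => (b v.toNNReal t : ℝ)) hr',
        intervalIntegral.integral_interval_sub_left (gm t).intervalIntegrable
          (gm t).intervalIntegrable, smul_eq_mul]
  · intro t s s' h
    refine Real.toNNReal_le_toNNReal (intervalIntegral.integral_mono_on (by norm_num)
      (hint s t) (hint s' t) fun u hu => gm t ?_)
    exact mul_le_mul_of_nonneg_right (NNReal.coe_le_coe.2 h) (by linarith [hu.1])
  · exact hβ0
  · intro s t t' h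
    exact Real.toNNReal_le_toNNReal (intervalIntegral.integral_mono_on (by norm_num)
      (hint s t') (hint s t) fun u hu => NNReal.coe_le_coe.2 (hanti _ h))
  · intro s
    exact tendsto_of_tendsto_of_tendsto_of_le_of_le tendsto_const_nhds (hlim (2 * s))
      (fun _ => bot_le) (fun t => hup' s t)
  · intro s t
    exact NNReal.le_toNNReal_of_coe_le (hlow s t)

/-! ### Detectability along a single trajectory -/

/-- If `C` bounds the initial `W`, and `W + χ(A) ≤ C` wherever `χ(A)` may exceed the decrease
`α(σ)`, then `{W ≤ C}` is invariant for stage costs at most `A`. Hence `α(σ)` stays below `C + χ(A)`. -/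
lemma stable_of_detect (α χ : ℝ≥0 → ℝ≥0) (hχ : Monotone χ) (s w l : ℕ → ℝ≥0)
    (hdec : ∀ k, w (k + 1) + α (s k) ≤ w k + χ (l k)) (A C : ℝ≥0) (hl : ∀ k, l k ≤ A)
    (h0 : w 0 ≤ C) (hC : ∀ k, α (s k) ≤ χ A → w k + χ A ≤ C) (k : ℕ) :
    α (s k) ≤ C + χ A := by
  have hw : ∀ k, w k ≤ C := by
    intro k
    induction k with
    | zero => exact h0
    | succ k ih =>
      have h1 := hdec k
      have h2 := hχ (hl k)
      rcases le_total (α (s k)) (χ A) with h | h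
      · calc w (k + 1) ≤ w (k + 1) + α (s k) := le_self_add
          _ ≤ w k + χ (l k) := h1
          _ ≤ w k + χ A := by gcongr
          _ ≤ C := hC k h
      · have h3 : w (k + 1) + α (s k) ≤ w k + α (s k) :=
          h1.trans (by gcongr; exact h2.trans h)
        exact (le_of_add_le_add_right h3).trans ih
  calc α (s k) ≤ w (k + 1) + α (s k) := le_add_self
    _ ≤ w k + χ (l k) := hdec k
    _ ≤ C + χ A := add_le_add (hw k) (hχ (hl k))

/-- If `α(σ) ≥ a` at all times before `T`, then `T` is at most `(w₀ + χ(A) A / δ) · 2 / a`, where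
`χ(δ) ≤ a / 2` and `A` bounds the total stage cost. -/
lemma attract_of_detect (α χ : ℝ≥0 → ℝ≥0) (hχ : Monotone χ) (s w l : ℕ → ℝ≥0)
    (hdec : ∀ k, w (k + 1) + α (s k) ≤ w k + χ (l k)) (A δ a : ℝ≥0) (hδ : 0 < δ)
    (hl : ∀ k, l k ≤ A) (hsum : ∀ N, ∑ k ∈ Finset.range N, l k ≤ A)
    (ha : χ δ ≤ a / 2) (T : ℕ) (hT : ∀ k < T, a ≤ α (s k)) :
    (T : ℝ) * (a / 2) ≤ w 0 + χ A * A / δ := by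
  have key : ∀ N ≤ T, (w N : ℝ) + N * (a / 2) ≤
      w 0 + χ A / δ * (∑ k ∈ Finset.range N, (l k : ℝ)) := by
    intro N hN
    induction N with
    | zero => simp
    | succ N ih =>
      have ih' := ih (by omega)
      have h1 : (w (N + 1) : ℝ) + α (s N) ≤ w N + χ (l N) := by exact_mod_cast hdec N
      have h2 : (a : ℝ) ≤ α (s N) := by exact_mod_cast hT N (by omega)
      have hδ' : (0:ℝ) < δ := by exact_mod_cast hδ
      have h3 : (χ (l N) : ℝ) ≤ a / 2 + χ A / δ * l N := by
        rcases le_total (l N) δ with h | h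
        · have h4 : (χ (l N) : ℝ) ≤ a / 2 := by exact_mod_cast (hχ h).trans ha
          have : (0:ℝ) ≤ χ A / δ * l N := by positivity
          linarith
        · have h4 : (χ (l N) : ℝ) ≤ χ A := by exact_mod_cast hχ (hl N)
          have h5 : (δ:ℝ) ≤ l N := by exact_mod_cast h
          have h6 : (χ A : ℝ) / δ * δ ≤ χ A / δ * l N := by gcongr
          rw [div_mul_cancel₀ _ hδ'.ne'] at h6
          have : (0:ℝ) ≤ a / 2 := by positivity
          linarith
      rw [Finset.sum_range_succ]
      push_cast
      linarith
  have h1 := key T le_rfl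
  have h2 : (∑ k ∈ Finset.range T, (l k : ℝ)) ≤ A := by exact_mod_cast hsum T
  have h3 : (χ A : ℝ) / δ * (∑ k ∈ Finset.range T, (l k : ℝ)) ≤ χ A / δ * A := by gcongr
  have h4 : (χ A : ℝ) / δ * A = χ A * A / δ := by ring
  have h5 : (0:ℝ) ≤ w T := (w T).2
  linarith

/-! ### Costs, policy improvement and stability of closed loops -/

section Dynamics

variable (f : (Fin n → ℝ) → (Fin m → ℝ) → Fin n → ℝ)
  (ℓ : (Fin n → ℝ) → (Fin m → ℝ) → ℝ≥0)

lemma phiCL_add (h : (Fin n → ℝ) → Fin m → ℝ) (x : Fin n → ℝ) (j k : ℕ) :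
    phiCL f h x (j + k) = phiCL f h (phiCL f h x j) k := by
  induction k with
  | zero => rfl
  | succ k ih => rw [← add_assoc]; simp only [phiCL, ih]

lemma phiCL_succ' (h : (Fin n → ℝ) → Fin m → ℝ) (x : Fin n → ℝ) (k : ℕ) :
    phiCL f h x (k + 1) = phiCL f h (f x (h x)) k := by
  rw [add_comm, phiCL_add]; rfl

lemma Jcost_eq (h : (Fin n → ℝ) → Fin m → ℝ) (x : Fin n → ℝ) :
    Jcost f ℓ x h = ℓ x (h x) + Jcost f ℓ (f x (h x)) h := by
  unfold Jcost
  rw [tsum_eq_zero_add' ENNReal.summable]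
  simp only [phiCL_succ']
  rfl

lemma phiOL_eq_phiCL (h : (Fin n → ℝ) → Fin m → ℝ) (x : Fin n → ℝ) (k : ℕ) :
    phiOL f x (fun k => h (phiCL f h x k)) k = phiCL f h x k := by
  induction k with
  | zero => rfl
  | succ k ih => simp only [phiOL, phiCL, ih]

variable {f ℓ}

/-- A policy along which `V` decreases by at least the stage cost has cost at most `V`. -/
lemma Jcost_le_of_decrease (V : (Fin n → ℝ) → ℝ≥0∞) (h : (Fin n → ℝ) → Fin m → ℝ)
    (hV : ∀ x, (ℓ x (h x) : ℝ≥0∞) + V (f x (h x)) ≤ V x) (x : Fin n → ℝ) :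
    Jcost f ℓ x h ≤ V x := by
  have key : ∀ N : ℕ, ∑ k ∈ Finset.range N, (ℓ (phiCL f h x k) (h (phiCL f h x k)) : ℝ≥0∞)
      + V (phiCL f h x N) ≤ V x := by
    intro N
    induction N with
    | zero => simp [phiCL]
    | succ N ih =>
      rw [Finset.sum_range_succ, add_assoc]
      exact (add_le_add le_rfl (hV _)).trans ih
  unfold Jcost
  rw [ENNReal.tsum_eq_iSup_nat]
  exact iSup_le fun N => le_self_add.trans (key N)

/-- The `i`-th policy costs at most what `g` costs, plus the cost of `h⁰` from the state that
`g` reaches after `i` steps. -/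
lemma Jcost_le_add {Uset : (Fin n → ℝ) → Set (Fin m → ℝ)}
    {hseq : ℕ → (Fin n → ℝ) → Fin m → ℝ} (hadm : ∀ i x, hseq i x ∈ Uset x)
    (hPI : ∀ i x, ∀ u ∈ Uset x,
      (ℓ x (hseq (i + 1) x) : ℝ≥0∞) + Jcost f ℓ (f x (hseq (i + 1) x)) (hseq i)
        ≤ (ℓ x u : ℝ≥0∞) + Jcost f ℓ (f x u) (hseq i))
    {g : (Fin n → ℝ) → Fin m → ℝ} (hg : ∀ x, g x ∈ Uset x) (i : ℕ) (x : Fin n → ℝ) :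
    Jcost f ℓ x (hseq i) ≤ Jcost f ℓ x g + Jcost f ℓ (phiCL f g x i) (hseq 0) := by
  induction i generalizing x with
  | zero => exact le_add_self
  | succ i ih =>
    have hdec : ∀ y, Jcost f ℓ y (hseq (i + 1)) ≤ Jcost f ℓ y (hseq i) :=
      Jcost_le_of_decrease (fun y => Jcost f ℓ y (hseq i)) (hseq (i + 1)) fun y =>
        (hPI i y _ (hadm i y)).trans (Jcost_eq f ℓ (hseq i) y).ge
    calc Jcost f ℓ x (hseq (i + 1))
        = ℓ x (hseq (i + 1) x) + Jcost f ℓ (f x (hseq (i + 1) x)) (hseq (i + 1)) :=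
          Jcost_eq f ℓ _ x
      _ ≤ ℓ x (hseq (i + 1) x) + Jcost f ℓ (f x (hseq (i + 1) x)) (hseq i) := by
          gcongr; exact hdec _
      _ ≤ ℓ x (g x) + Jcost f ℓ (f x (g x)) (hseq i) := hPI i x _ (hg x)
      _ ≤ ℓ x (g x) + (Jcost f ℓ (f x (g x)) g
            + Jcost f ℓ (phiCL f g (f x (g x)) i) (hseq 0)) := by gcongr; exact ih _
      _ = _ := by rw [← add_assoc, ← Jcost_eq, phiCL_succ']

lemma sum_le_of_Jcost_le {h : (Fin n → ℝ) → Fin m → ℝ} {x : Fin n → ℝ} {A : ℝ≥0}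
    (hA : Jcost f ℓ x h ≤ A) (N : ℕ) :
    ∑ k ∈ Finset.range N, ℓ (phiCL f h x k) (h (phiCL f h x k)) ≤ A := by
  have h1 := (ENNReal.sum_le_tsum (Finset.range N)).trans hA
  exact_mod_cast h1

/-- A policy whose cost is bounded by `ᾱ_V ∘ σ` makes `σ` decay at a class-KL rate. -/
lemma exists_classKL_of_detect {Uset : (Fin n → ℝ) → Set (Fin m → ℝ)} {σ : (Fin n → ℝ) → ℝ≥0}
    {W : (Fin n → ℝ) → ℝ≥0} {alphaW chiW alphaWbar alphaV : ℝ≥0 → ℝ≥0}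
    (halphaW : ClassKInf alphaW) (hchiW : ClassKInf chiW)
    (hWbc : Continuous alphaWbar) (hWbm : Monotone alphaWbar) (hWb0 : alphaWbar 0 = 0)
    (hdet1 : ∀ x, W x ≤ alphaWbar (σ x))
    (hdet2 : ∀ x, ∀ u ∈ Uset x, W (f x u) + alphaW (σ x) ≤ W x + chiW (ℓ x u))
    (halphaV : ClassKInf alphaV) {g : (Fin n → ℝ) → Fin m → ℝ} (hg : ∀ x, g x ∈ Uset x)
    (hJ : ∀ x, Jcost f ℓ x g ≤ (alphaV (σ x) : ℝ≥0∞)) :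
    ∃ β, ClassKL β ∧ ∀ (i : ℕ) (x : Fin n → ℝ), σ (phiCL f g x i) ≤ β (σ x) (i : ℝ≥0) := by
  obtain ⟨hαc, hαm, hα0, hαu⟩ := halphaW
  obtain ⟨hχc, hχm, hχ0, -⟩ := hchiW
  obtain ⟨hVc, hVm, hV0, -⟩ := halphaV
  -- small arguments give small values
  have small : ∀ F : ℝ≥0 → ℝ≥0, Continuous F → F 0 = 0 → ∀ ε : ℝ≥0, 0 < ε →
      ∃ ρ : ℝ≥0, 0 < ρ ∧ F ρ ≤ ε := by
    intro F hF hF0 ε hε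
    have h1 : ∀ᶠ s in nhds (0:ℝ≥0), F s < ε :=
      hF.continuousAt.eventually_lt continuousAt_const (by simpa [hF0] using hε)
    obtain ⟨ρ, hρ, h2⟩ := NNReal.nhds_zero_basis.eventually_iff.1 h1
    exact ⟨ρ / 2, by positivity, (h2 (NNReal.half_lt_self hρ.ne')).le⟩
  have hαpos : ∀ s : ℝ≥0, 0 < s → 0 < alphaW s := fun s hs => hα0 ▸ hαm hs
  have hsum : ∀ r x, σ x ≤ r → ∀ N, ∑ k ∈ Finset.range N,
      ℓ (phiCL f g x k) (g (phiCL f g x k)) ≤ alphaV r := fun r x hx N =>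
    sum_le_of_Jcost_le ((hJ x).trans (by exact_mod_cast hVm.monotone hx)) N
  have hl : ∀ r x, σ x ≤ r → ∀ k, ℓ (phiCL f g x k) (g (phiCL f g x k)) ≤ alphaV r := by
    intro r x hx k
    refine le_trans ?_ (hsum r x hx (k + 1))
    rw [Finset.sum_range_succ]
    exact le_add_self
  have hdec : ∀ x k, W (phiCL f g x (k + 1)) + alphaW (σ (phiCL f g x k)) ≤
      W (phiCL f g x k) + chiW (ℓ (phiCL f g x k) (g (phiCL f g x k))) := fun x k =>
    hdet2 _ _ (hg _)
  have bounded : ∀ r, ∃ B, ∀ x, σ x ≤ r → ∀ k, σ (phiCL f g x k) ≤ B := by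
    intro r
    obtain ⟨q, hq⟩ := hαu (chiW (alphaV r))
    obtain ⟨B, hB⟩ := hαu (alphaWbar (max r q) + chiW (alphaV r) + chiW (alphaV r))
    refine ⟨B, fun x hx k => hαm.le_iff_le.1 (le_trans ?_ hB)⟩
    refine stable_of_detect alphaW chiW hχm.monotone (fun k => σ (phiCL f g x k))
      (fun k => W (phiCL f g x k)) _ (hdec x) (alphaV r) _ (hl r x hx) ?_ ?_ k
    · exact ((hdet1 x).trans (hWbm (hx.trans (le_max_left _ _)))).trans le_self_add
    · intro k hk
      have h1 : σ (phiCL f g x k) ≤ q := hαm.le_iff_le.1 (hk.trans hq)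
      gcongr
      exact (hdet1 _).trans (hWbm (h1.trans (le_max_right _ _)))
  have stable : ∀ ε : ℝ≥0, 0 < ε →
      ∃ ρ : ℝ≥0, 0 < ρ ∧ ∀ x, σ x ≤ ρ → ∀ k, σ (phiCL f g x k) ≤ ε := by
    intro ε hε
    have he := hαpos ε hε
    obtain ⟨τ, hτ, hτW⟩ := small alphaWbar hWbc hWb0 (alphaW ε / 4) (by positivity)
    obtain ⟨ρ, hρ, hρA⟩ := small (fun s => chiW (alphaV s)) (hχc.comp hVc) (by simp [hV0, hχ0])
      (min (alphaW τ) (alphaW ε / 4)) (lt_min (hαpos τ hτ) (by positivity))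
    refine ⟨min ρ τ, lt_min hρ hτ, fun x hx k => hαm.le_iff_le.1 ?_⟩
    have hA1 : chiW (alphaV ρ) ≤ alphaW τ := hρA.trans (min_le_left _ _)
    have hA2 : chiW (alphaV ρ) ≤ alphaW ε / 4 := hρA.trans (min_le_right _ _)
    have h44 : alphaW ε / 4 + alphaW ε / 4 = alphaW ε / 2 := by
      rw [← NNReal.coe_inj]; push_cast; ring
    refine (stable_of_detect alphaW chiW hχm.monotone (fun k => σ (phiCL f g x k))
      (fun k => W (phiCL f g x k)) _ (hdec x) (alphaV ρ) (alphaW ε / 2)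
      (hl ρ x (hx.trans (min_le_left _ _))) ?_ ?_ k).trans ?_
    · rw [← h44]
      exact ((hdet1 x).trans ((hWbm (hx.trans (min_le_right _ _))).trans hτW)).trans le_self_add
    · intro k hk
      have h1 : σ (phiCL f g x k) ≤ τ := hαm.le_iff_le.1 (hk.trans hA1)
      rw [← h44]
      exact add_le_add ((hdet1 _).trans ((hWbm h1).trans hτW)) hA2
    · calc alphaW ε / 2 + chiW (alphaV ρ) ≤ alphaW ε / 2 + (alphaW ε / 4 + alphaW ε / 4) := by
            gcongr; exact hA2.trans le_self_add
        _ = alphaW ε := by rw [h44, add_halves]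
  have attract : ∀ r ε : ℝ≥0, 0 < ε →
      ∃ T : ℕ, ∀ x, σ x ≤ r → ∀ k, T ≤ k → σ (phiCL f g x k) ≤ ε := by
    intro r ε hε
    obtain ⟨ρ, hρ, hst⟩ := stable ε hε
    have ha := hαpos ρ hρ
    obtain ⟨δ, hδ, hδa⟩ := small chiW hχc hχ0 (alphaW ρ / 2) (by positivity)
    have ha' : (0:ℝ) < (alphaW ρ : ℝ) / 2 := by
      have : (0:ℝ) < alphaW ρ := by exact_mod_cast ha
      positivity
    obtain ⟨T, hT⟩ := exists_nat_gt
      (((alphaWbar r : ℝ) + chiW (alphaV r) * alphaV r / δ) / ((alphaW ρ : ℝ) / 2))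
    rw [div_lt_iff₀ ha'] at hT
    refine ⟨T, fun x hx k hk => ?_⟩
    -- some time before `T` has `σ ≤ ρ`; from there on stability applies
    have hex : ∃ j < T, σ (phiCL f g x j) ≤ ρ := by
      by_contra! hcon
      have h1 := attract_of_detect alphaW chiW hχm.monotone (fun k => σ (phiCL f g x k))
        (fun k => W (phiCL f g x k)) _ (hdec x) (alphaV r) δ (alphaW ρ) hδ (hl r x hx)
        (hsum r x hx) hδa T fun j hj => hαm.monotone (hcon j hj).le
      have h2 : (W (phiCL f g x 0) : ℝ) ≤ alphaWbar r := by
        exact_mod_cast (hdet1 x).trans (hWbm hx)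
      linarith
    obtain ⟨j, hj, hjρ⟩ := hex
    obtain ⟨d, rfl⟩ := Nat.exists_eq_add_of_le (hj.le.trans hk)
    rw [phiCL_add]
    exact hst _ hjρ d
  let S : ℝ≥0 → ℝ≥0 → Set ℝ≥0 := fun s t =>
    {y | ∃ (x : Fin n → ℝ) (j : ℕ), σ x ≤ s ∧ t ≤ j ∧ y = σ (phiCL f g x j)}
  have hS : ∀ s t, BddAbove (S s t) := by
    intro s t
    obtain ⟨B, hB⟩ := bounded s
    exact ⟨B, by rintro y ⟨x, j, hx, -, rfl⟩; exact hB x hx j⟩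
  -- in `ℝ≥0` the supremum of the empty set is `0`, so no nonemptiness is needed
  have hmono : ∀ {s t s' t'}, S s t ⊆ S s' t' → sSup (S s t) ≤ sSup (S s' t') := by
    intro s t s' t' h
    exact csSup_le' fun y hy => le_csSup (hS s' t') (h hy)
  suffices h : ∃ β, ClassKL β ∧ ∀ s t, sSup (S s t) ≤ β s t by
    obtain ⟨β, hβ, hle⟩ := h
    exact ⟨β, hβ, fun i x => (le_csSup (hS _ _) ⟨x, i, le_rfl, le_rfl, rfl⟩).trans (hle _ _)⟩
  refine exists_classKL_ge (fun s t => sSup (S s t)) ?_ ?_ ?_ ?_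
  · intro t s s' h
    exact hmono (by rintro y ⟨x, j, hx, hj, rfl⟩; exact ⟨x, j, hx.trans h, hj, rfl⟩)
  · intro s t t' h
    exact hmono (by rintro y ⟨x, j, hx, hj, rfl⟩; exact ⟨x, j, hx, h.trans hj, rfl⟩)
  · intro s
    refine tendsto_zero_of_eventually_le ?_
    intro ε hε
    obtain ⟨T, hT⟩ := attract s ε hε
    filter_upwards [Filter.eventually_ge_atTop (T : ℝ≥0)] with t ht
    refine csSup_le' ?_
    rintro y ⟨x, j, hx, hj, rfl⟩
    exact hT x hx j (by exact_mod_cast ht.trans hj)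
  · intro ε hε
    obtain ⟨ρ, hρ, h⟩ := stable ε hε
    refine ⟨ρ, hρ, fun t => csSup_le' ?_⟩
    rintro y ⟨x, j, hx, -, rfl⟩
    exact h x hx j

end Dynamics

/-- explicit near-optimality bound
`Vⁱ(x) − V*(x) ≤ α̃(β(σ(x), i))` for a class-KL `β` and a continuous
nondecreasing `α̃` with `α̃(0)=0`. -/
theorem pi_near_optimality_explicit
    (f : (Fin n → ℝ) → (Fin m → ℝ) → Fin n → ℝ)
    (ℓ : (Fin n → ℝ) → (Fin m → ℝ) → ℝ≥0)
    (Uset : (Fin n → ℝ) → Set (Fin m → ℝ))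
    (hUne : ∀ x, (Uset x).Nonempty)
    (σ : (Fin n → ℝ) → ℝ≥0) (hσ : Continuous σ)
    -- PI sequence: admissible policies, each `h^{i+1}(x)` minimizing
    -- `u ↦ ℓ(x,u) + Vⁱ(f(x,u))` over `U(x)` with `Vⁱ = J(·, hⁱ)`
    (hseq : ℕ → (Fin n → ℝ) → Fin m → ℝ)
    (hadm : ∀ i x, hseq i x ∈ Uset x)
    (hPI : ∀ i x, ∀ u ∈ Uset x,
      (ℓ x (hseq (i + 1) x) : ℝ≥0∞) + Jcost f ℓ (f x (hseq (i + 1) x)) (hseq i)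
        ≤ (ℓ x u : ℝ≥0∞) + Jcost f ℓ (f x u) (hseq i))
    -- detectability assumption
    (W : (Fin n → ℝ) → ℝ≥0) (hWcont : Continuous W)
    (alphaW chiW : ℝ≥0 → ℝ≥0) (halphaW : ClassKInf alphaW) (hchiW : ClassKInf chiW)
    (alphaWbar : ℝ≥0 → ℝ≥0) (halphaWbar_cont : Continuous alphaWbar)
    (halphaWbar_mono : Monotone alphaWbar) (halphaWbar_zero : alphaWbar 0 = 0)
    (hdet1 : ∀ x, W x ≤ alphaWbar (σ x))
    (hdet2 : ∀ x, ∀ u ∈ Uset x, W (f x u) + alphaW (σ x) ≤ W x + chiW (ℓ x u))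
    -- initial stabilizing bound `V⁰ ≤ ᾱ_V ∘ σ`
    (alphaV : ℝ≥0 → ℝ≥0) (halphaV : ClassKInf alphaV)
    (hV0 : ∀ x, Jcost f ℓ x (hseq 0) ≤ (alphaV (σ x) : ℝ≥0∞))
    -- `h*` : admissible globally optimal policy
    (hstar : (Fin n → ℝ) → Fin m → ℝ)
    (hstar_adm : ∀ x, hstar x ∈ Uset x)
    (hstar_fin : ∀ x, Jcost f ℓ x hstar < ⊤)
    (hstar_opt : ∀ (x : Fin n → ℝ) (u : ℕ → Fin m → ℝ),
      (∀ k, u k ∈ Uset (phiOL f x u k)) → Jcost f ℓ x hstar ≤ JcostOL f ℓ x u) :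
    ∃ (β : ℝ≥0 → ℝ≥0 → ℝ≥0) (alphatilde : ℝ≥0 → ℝ≥0), ClassKL β ∧
      Continuous alphatilde ∧ Monotone alphatilde ∧ alphatilde 0 = 0 ∧
      ∀ (i : ℕ) (x : Fin n → ℝ),
        Jcost f ℓ x (hseq i) - Jcost f ℓ x hstar
          ≤ (alphatilde (β (σ x) (i : ℝ≥0)) : ℝ≥0∞) := by
  have hJ : ∀ x, Jcost f ℓ x hstar ≤ (alphaV (σ x) : ℝ≥0∞) := by
    intro x
    have h1 := hstar_opt x (fun k => hseq 0 (phiCL f (hseq 0) x k)) fun k => by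
      rw [phiOL_eq_phiCL]; exact hadm 0 _
    refine (h1.trans (le_of_eq ?_)).trans (hV0 x)
    simp only [JcostOL, Jcost, phiOL_eq_phiCL]
  obtain ⟨β, hβ, hle⟩ := exists_classKL_of_detect halphaW hchiW halphaWbar_cont halphaWbar_mono
    halphaWbar_zero hdet1 hdet2 halphaV hstar_adm hJ
  refine ⟨β, alphaV, hβ, halphaV.1, halphaV.2.1.monotone, halphaV.2.2.1, fun i x => ?_⟩
  rw [tsub_le_iff_left]
  refine (Jcost_le_add hadm hPI hstar_adm i x).trans ?_
  gcongr
  exact (hV0 _).trans (by exact_mod_cast halphaV.2.1.monotone (hle i x))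

end
end

section
/- Suppose a PI sequence (h^i)_{i≥0} exists, the initial stabilizing bound V⁰ ≤ ᾱ_V∘σ holds with ᾱ_V of class K∞, and h* is an admissible globally optimal policy with V* := J(·,h*). Then for every iteration i ≥ 0 and every x ∈ ℝ^n: V*(f(x, h^i(x))) − V*(x) ≤ −ℓ(x, h^i(x)) + V⁰(φ(i,x,h*)) − V*(φ(i,x,h*)). -/
/-!
Write `Vᵢ = J(·,hⁱ)` and `V⋆ = J(·,h⋆)`. A policy cost satisfies the Bellman identity
`J(x,h) = ℓ(x,h(x)) + J(f(x,h(x)),h)` (`Jcost_eq_add`), and policy iteration does not increase the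
cost, `Vᵢ₊₁ ≤ Vᵢ` (`Jcost_PI_anti`). Together these give
`Vᵢ₊₁(x) ≤ ℓ(x,h⋆(x)) + Vᵢ(f(x,h⋆(x)))`, so following `h⋆` for `i` steps yields
`Vᵢ(x) + V⋆(φ(i,x,h⋆)) ≤ V⋆(x) + V₀(φ(i,x,h⋆))` (`Jcost_PI_add_le`).
The theorem follows, since `V⋆(f(x,hⁱ(x))) + ℓ(x,hⁱ(x)) ≤ Vᵢ(x)` by optimality of `h⋆` and the
Bellman identity for `hⁱ`. Everything takes place in `[0,∞]` without subtraction.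
-/

open scoped NNReal ENNReal Topology

noncomputable section

variable {n m : ℕ}

theorem phiCL_shift (f : (Fin n → ℝ) → (Fin m → ℝ) → Fin n → ℝ)
    (h : (Fin n → ℝ) → Fin m → ℝ) (x : Fin n → ℝ) (k : ℕ) :
    phiCL f h (f x (h x)) k = phiCL f h x (k + 1) := by
  induction k with
  | zero => rfl
  | succ k ih => exact congrArg (fun y => f y (h y)) ih

/-- Bellman identity for the cost of a fixed policy. -/
theorem Jcost_eq_add (f : (Fin n → ℝ) → (Fin m → ℝ) → Fin n → ℝ)
    (ℓ : (Fin n → ℝ) → (Fin m → ℝ) → ℝ≥0)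
    (x : Fin n → ℝ) (h : (Fin n → ℝ) → Fin m → ℝ) :
    Jcost f ℓ x h = (ℓ x (h x) : ℝ≥0∞) + Jcost f ℓ (f x (h x)) h := by
  unfold Jcost
  rw [tsum_eq_zero_add' ENNReal.summable]
  simp only [phiCL_shift]
  rfl

/-- A function `W` with `ℓ(x,h(x)) + W(f(x,h(x))) ≤ W(x)` bounds the cost of `h`: iterating the
inequality bounds every partial sum of the cost. -/
theorem Jcost_le_of_supersolution (f : (Fin n → ℝ) → (Fin m → ℝ) → Fin n → ℝ)
    (ℓ : (Fin n → ℝ) → (Fin m → ℝ) → ℝ≥0)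
    (h : (Fin n → ℝ) → Fin m → ℝ) (W : (Fin n → ℝ) → ℝ≥0∞)
    (hW : ∀ x, (ℓ x (h x) : ℝ≥0∞) + W (f x (h x)) ≤ W x) (x : Fin n → ℝ) :
    Jcost f ℓ x h ≤ W x := by
  have key : ∀ N : ℕ, (∑ k ∈ Finset.range N,
      (ℓ (phiCL f h x k) (h (phiCL f h x k)) : ℝ≥0∞)) + W (phiCL f h x N) ≤ W x := by
    intro N
    induction N with
    | zero => simp [phiCL]
    | succ N ih =>
      rw [Finset.sum_range_succ, add_assoc]
      exact (add_le_add le_rfl (hW (phiCL f h x N))).trans ih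
  unfold Jcost
  rw [ENNReal.tsum_eq_iSup_nat]
  exact iSup_le fun N => le_self_add.trans (key N)

/-- Policy improvement: one step of policy iteration does not increase the cost. -/
theorem Jcost_PI_anti (f : (Fin n → ℝ) → (Fin m → ℝ) → Fin n → ℝ)
    (ℓ : (Fin n → ℝ) → (Fin m → ℝ) → ℝ≥0)
    (Uset : (Fin n → ℝ) → Set (Fin m → ℝ))
    (hseq : ℕ → (Fin n → ℝ) → Fin m → ℝ)
    (hadm : ∀ i x, hseq i x ∈ Uset x)
    (hPI : ∀ i x, ∀ u ∈ Uset x,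
      (ℓ x (hseq (i + 1) x) : ℝ≥0∞) + Jcost f ℓ (f x (hseq (i + 1) x)) (hseq i)
        ≤ (ℓ x u : ℝ≥0∞) + Jcost f ℓ (f x u) (hseq i))
    (i : ℕ) (x : Fin n → ℝ) :
    Jcost f ℓ x (hseq (i + 1)) ≤ Jcost f ℓ x (hseq i) :=
  Jcost_le_of_supersolution f ℓ (hseq (i + 1)) (fun y => Jcost f ℓ y (hseq i))
    (fun y => (hPI i y _ (hadm i y)).trans (Jcost_eq_add f ℓ y (hseq i)).ge) x

/-- Comparison of the `i`-th iterate with any admissible policy `g`: the suboptimality gap at `x`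
is at most that of the initial policy at the state reached by following `g` for `i` steps. -/
theorem Jcost_PI_add_le (f : (Fin n → ℝ) → (Fin m → ℝ) → Fin n → ℝ)
    (ℓ : (Fin n → ℝ) → (Fin m → ℝ) → ℝ≥0)
    (Uset : (Fin n → ℝ) → Set (Fin m → ℝ))
    (hseq : ℕ → (Fin n → ℝ) → Fin m → ℝ)
    (hadm : ∀ i x, hseq i x ∈ Uset x)
    (hPI : ∀ i x, ∀ u ∈ Uset x,
      (ℓ x (hseq (i + 1) x) : ℝ≥0∞) + Jcost f ℓ (f x (hseq (i + 1) x)) (hseq i)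
        ≤ (ℓ x u : ℝ≥0∞) + Jcost f ℓ (f x u) (hseq i))
    (g : (Fin n → ℝ) → Fin m → ℝ) (hg : ∀ x, g x ∈ Uset x) (i : ℕ) :
    ∀ x : Fin n → ℝ, Jcost f ℓ x (hseq i) + Jcost f ℓ (phiCL f g x i) g
      ≤ Jcost f ℓ x g + Jcost f ℓ (phiCL f g x i) (hseq 0) := by
  induction i with
  | zero => intro x; exact (add_comm _ _).le
  | succ i ih =>
    intro x
    have step : Jcost f ℓ x (hseq (i + 1))
        ≤ (ℓ x (g x) : ℝ≥0∞) + Jcost f ℓ (f x (g x)) (hseq i) := by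
      rw [Jcost_eq_add]
      exact (add_le_add le_rfl (Jcost_PI_anti f ℓ Uset hseq hadm hPI i _)).trans
        (hPI i x _ (hg x))
    rw [← phiCL_shift, Jcost_eq_add f ℓ x g, add_assoc]
    refine (add_le_add step le_rfl).trans ?_
    rw [add_assoc]
    exact add_le_add le_rfl (ih (f x (g x)))

/-- Applying a policy in feedback generates the same cost as its recorded input sequence, so an
open-loop optimal policy is no worse than any admissible policy. -/
theorem Jcost_le_of_openLoop_opt (f : (Fin n → ℝ) → (Fin m → ℝ) → Fin n → ℝ)
    (ℓ : (Fin n → ℝ) → (Fin m → ℝ) → ℝ≥0)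
    (Uset : (Fin n → ℝ) → Set (Fin m → ℝ))
    (hstar : (Fin n → ℝ) → Fin m → ℝ)
    (hstar_opt : ∀ (x : Fin n → ℝ) (u : ℕ → Fin m → ℝ),
      (∀ k, u k ∈ Uset (phiOL f x u k)) → Jcost f ℓ x hstar ≤ JcostOL f ℓ x u)
    (g : (Fin n → ℝ) → Fin m → ℝ) (hg : ∀ x, g x ∈ Uset x) (x : Fin n → ℝ) :
    Jcost f ℓ x hstar ≤ Jcost f ℓ x g := by
  have hφ : ∀ k, phiOL f x (fun j => g (phiCL f g x j)) k = phiCL f g x k := by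
    intro k
    induction k with
    | zero => rfl
    | succ k ih => rw [phiOL, ih, phiCL]
  refine (hstar_opt x (fun j => g (phiCL f g x j)) fun k => ?_).trans ?_
  · rw [hφ]; exact hg _
  · simp only [JcostOL, Jcost, hφ, le_refl]

/-- the optimal value function decreases along the PI policies:
`V*(f(x,hⁱ(x))) − V*(x) ≤ −ℓ(x,hⁱ(x)) + V⁰(φ(i,x,h*)) − V*(φ(i,x,h*))`,
stated here in the (equivalent, all subtracted terms being finite)
additive form in `[0,∞]`. -/
theorem optimal_value_dissipation_along_pi
    (f : (Fin n → ℝ) → (Fin m → ℝ) → Fin n → ℝ)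
    (ℓ : (Fin n → ℝ) → (Fin m → ℝ) → ℝ≥0)
    (Uset : (Fin n → ℝ) → Set (Fin m → ℝ))
    (hUne : ∀ x, (Uset x).Nonempty)
    (σ : (Fin n → ℝ) → ℝ≥0) (hσ : Continuous σ)
    -- PI sequence
    (hseq : ℕ → (Fin n → ℝ) → Fin m → ℝ)
    (hadm : ∀ i x, hseq i x ∈ Uset x)
    (hPI : ∀ i x, ∀ u ∈ Uset x,
      (ℓ x (hseq (i + 1) x) : ℝ≥0∞) + Jcost f ℓ (f x (hseq (i + 1) x)) (hseq i)
        ≤ (ℓ x u : ℝ≥0∞) + Jcost f ℓ (f x u) (hseq i))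
    -- initial stabilizing bound `V⁰ ≤ ᾱ_V ∘ σ`
    (alphaV : ℝ≥0 → ℝ≥0) (halphaV : ClassKInf alphaV)
    (hV0 : ∀ x, Jcost f ℓ x (hseq 0) ≤ (alphaV (σ x) : ℝ≥0∞))
    -- `h*` : admissible globally optimal policy
    (hstar : (Fin n → ℝ) → Fin m → ℝ)
    (hstar_adm : ∀ x, hstar x ∈ Uset x)
    (hstar_fin : ∀ x, Jcost f ℓ x hstar < ⊤)
    (hstar_opt : ∀ (x : Fin n → ℝ) (u : ℕ → Fin m → ℝ),
      (∀ k, u k ∈ Uset (phiOL f x u k)) → Jcost f ℓ x hstar ≤ JcostOL f ℓ x u) :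
    ∀ (i : ℕ) (x : Fin n → ℝ),
      Jcost f ℓ (f x (hseq i x)) hstar + (ℓ x (hseq i x) : ℝ≥0∞)
          + Jcost f ℓ (phiCL f hstar x i) hstar
        ≤ Jcost f ℓ x hstar + Jcost f ℓ (phiCL f hstar x i) (hseq 0) := by
  intro i x
  refine le_trans (add_le_add ?_ le_rfl)
    (Jcost_PI_add_le f ℓ Uset hseq hadm hPI hstar hstar_adm i x)
  rw [Jcost_eq_add f ℓ x (hseq i), add_comm]
  exact add_le_add le_rfl
    (Jcost_le_of_openLoop_opt f ℓ Uset hstar hstar_opt (hseq i) (hadm i) _)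

end
end
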